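/- For every k ≥ 1, 𝔏(ℤ^k)^w_{O(n)} is a proper subset of 𝔏(ℤ^{k+1})^w_{O(n)}: the language L_{k+1} = { 0^{a₁} 1 0^{a₂} 1 ⋯ 0^{a_{k+1}} 1 0^{a₁} 1 0^{a₂} 1 ⋯ 0^{a_{k+1}} 1 : a₁, …, a_{k+1} ≥ 0 } over the alphabet {0,1} is recognized in real time (every transition consumes an input symbol) by a ℤ^{k+1}-automaton, but is not recognized by any weakly linear-time bounded ℤ^k-automaton. -/

import Mathlib

/-- A `G`-automaton over input alphabet `α`: a nondeterministic finite automaton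
equipped with a register holding an element of the group `G`. -/
structure GAutomaton (α : Type*) (G : Type*) [Group G] where
  /-- the (finite) state set -/
  Q : Type
  finQ : Finite Q
  /-- the initial state -/
  q0 : Q
  /-- the accepting states -/
  acc : Set Q
  /-- the (finite) transition relation; `none` stands for ε -/
  δ : Set (Q × Option α × Q × G)
  finδ : δ.Finite

namespace GAutomaton

variable {α : Type*} {G : Type*} [Group G]

/-- One computation step between configurations `(state, register, remaining input)`. -/
def Step (M : GAutomaton α G) (c c' : M.Q × G × List α) : Prop :=
  ∃ σ m, (c.1, σ, c'.1, m) ∈ M.δ ∧ c'.2.1 = c.2.1 * m ∧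
    match σ with
    | none => c'.2.2 = c.2.2
    | some s => c.2.2 = s :: c'.2.2

/-- `M.StepsIn k c c'` : configuration `c'` is reachable from `c` in exactly `k` steps. -/
def StepsIn (M : GAutomaton α G) : ℕ → (M.Q × G × List α) → (M.Q × G × List α) → Prop
  | 0, c, c' => c = c'
  | n + 1, c, c' => ∃ d, M.Step c d ∧ M.StepsIn n d c'

/-- `M` accepts the word `w` within `t` computation steps. -/
def AcceptsIn (M : GAutomaton α G) (w : List α) (t : ℕ) : Prop :=
  ∃ k ≤ t, ∃ q ∈ M.acc, M.StepsIn k (M.q0, 1, w) (q, 1, [])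

/-- The language recognized by `M`. -/
def lang (M : GAutomaton α G) : Language α := {w | ∃ t, M.AcceptsIn w t}

/-- `M` is real-time if every transition consumes an input symbol. -/
def RealTime (M : GAutomaton α G) : Prop := ∀ tr ∈ M.δ, tr.2.1 ≠ none

end GAutomaton

/-- `L ∈ 𝔏(G)` : the language `L` is recognized by some `G`-automaton. -/
def GRecognizable (G : Type*) [Group G] {α : Type*} (L : Language α) : Prop :=
  ∃ M : GAutomaton α G, M.lang = L

/-- `L ∈ 𝔏(G)ʷ_{t(n)}` : `L` is recognized by a weakly `t(n)` time-bounded `G`-automaton. -/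
def GRecognizableInTime (G : Type*) [Group G] {α : Type*} (L : Language α) (t : ℕ → ℕ) : Prop :=
  ∃ M : GAutomaton α G, M.lang = L ∧ ∀ w ∈ L, M.AcceptsIn w (t w.length)

/-- `L ∈ 𝔏(G)ʷ_{O(n)}` : `L` is recognized by a weakly linear-time bounded `G`-automaton. -/
def GRecognizableLinTime (G : Type*) [Group G] {α : Type*} (L : Language α) : Prop :=
  ∃ C : ℕ, GRecognizableInTime G L (fun n => C * n + C)

/-- The language `L_k = { 0^(a₁) 1 ⋯ 0^(a_k) 1 0^(a₁) 1 ⋯ 0^(a_k) 1 }` over `{0,1}`. -/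
def doubledBlocks (k : ℕ) : Language (Fin 2) :=
  {w | ∃ a : Fin k → ℕ,
    w = (List.ofFn fun i => List.replicate (a i) 0 ++ [1]).flatten ++
        (List.ofFn fun i => List.replicate (a i) 0 ++ [1]).flatten}

namespace GAutomaton

section General

variable {α : Type*} {G H : Type*} [Group G] [Group H]

theorem StepsIn.trans {M : GAutomaton α G} {m n : ℕ} {c d e : M.Q × G × List α}
    (h₁ : M.StepsIn m c d) (h₂ : M.StepsIn n d e) : M.StepsIn (m + n) c e := by
  induction m generalizing c with
  | zero =>
    obtain rfl : c = d := h₁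
    simpa using h₂
  | succ m ih =>
    obtain ⟨b, hb, h₁⟩ := h₁
    rw [Nat.succ_add]
    exact ⟨b, hb, ih h₁⟩

/-- A computation consuming `u ++ v` passes through a configuration with remaining input `v`,
and the part of it before that configuration does not depend on `v`. -/
theorem StepsIn.split {M : GAutomaton α G} {n : ℕ} {q q' : M.Q} {x x' : G} {u v : List α}
    (h : M.StepsIn n (q, x, u ++ v) (q', x', [])) :
    ∃ m r p y, m + r = n ∧ (∀ v₂, M.StepsIn m (q, x, u ++ v₂) (p, y, v₂)) ∧
      M.StepsIn r (p, y, v) (q', x', []) := by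
  induction n generalizing q x u with
  | zero =>
    obtain ⟨rfl, rfl, huv⟩ : q = q' ∧ x = x' ∧ u ++ v = [] := by simpa [StepsIn] using h
    obtain ⟨rfl, rfl⟩ := List.append_eq_nil_iff.mp huv
    exact ⟨0, 0, q, x, rfl, fun v₂ => rfl, rfl⟩
  | succ n ih =>
    cases u with
    | nil => exact ⟨0, n + 1, q, x, by simp, fun v₂ => rfl, h⟩
    | cons a u =>
      obtain ⟨⟨p₁, y₁, w₁⟩, ⟨σ, g, hmem, hy, hw⟩, hrest⟩ := h
      cases σ with
      | none =>
        obtain rfl : w₁ = a :: u ++ v := hw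
        obtain ⟨m, r, p, y, hmr, hpre, hpost⟩ := ih hrest
        exact ⟨m + 1, r, p, y, by omega,
          fun v₂ => ⟨(p₁, y₁, a :: u ++ v₂), ⟨none, g, hmem, hy, rfl⟩, hpre v₂⟩, hpost⟩
      | some s =>
        obtain ⟨rfl, rfl⟩ : a = s ∧ u ++ v = w₁ := by simpa using hw
        obtain ⟨m, r, p, y, hmr, hpre, hpost⟩ := ih hrest
        exact ⟨m + 1, r, p, y, by omega,
          fun v₂ => ⟨(p₁, y₁, u ++ v₂), ⟨some a, g, hmem, hy, rfl⟩, hpre v₂⟩, hpost⟩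

/-- The automaton obtained by applying a homomorphism to all register updates. -/
def map (M : GAutomaton α G) (f : G →* H) : GAutomaton α H where
  Q := M.Q
  finQ := M.finQ
  q0 := M.q0
  acc := M.acc
  δ := (fun tr => (tr.1, tr.2.1, tr.2.2.1, f tr.2.2.2)) '' M.δ
  finδ := M.finδ.image _

theorem stepsIn_map_iff (M : GAutomaton α G) {f : G →* H} (hf : Function.Injective f)
    {n : ℕ} {q q' : M.Q} {x y : G} {w w' : List α} :
    (M.map f).StepsIn n (q, f x, w) (q', f y, w') ↔ M.StepsIn n (q, x, w) (q', y, w') := by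
  induction n generalizing q x w with
  | zero =>
    change (q, f x, w) = (q', f y, w') ↔ (q, x, w) = (q', y, w')
    simp only [Prod.mk.injEq, hf.eq_iff]
  | succ n ih =>
    constructor
    · rintro ⟨⟨p, z, v⟩, ⟨σ, g, ⟨⟨q₁, σ₁, p₁, g₁⟩, hmem, heq⟩, hz, hw⟩, hrest⟩
      obtain ⟨rfl, rfl, rfl, rfl⟩ : q₁ = q ∧ σ₁ = σ ∧ p₁ = p ∧ f g₁ = g :=
        ⟨congrArg (·.1) heq, congrArg (·.2.1) heq, congrArg (·.2.2.1) heq,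
          congrArg (·.2.2.2) heq⟩
      obtain rfl : z = f (x * g₁) := by rw [map_mul]; exact hz
      exact ⟨(p₁, x * g₁, v), ⟨σ₁, g₁, hmem, rfl, hw⟩, ih.mp hrest⟩
    · rintro ⟨⟨p, z, v⟩, ⟨σ, g, hmem, hz, hw⟩, hrest⟩
      refine ⟨(p, f z, v), ⟨σ, f g, ⟨_, hmem, rfl⟩, ?_, hw⟩, ih.mpr hrest⟩
      rw [← map_mul]
      exact congrArg f hz

theorem acceptsIn_map_iff (M : GAutomaton α G) {f : G →* H} (hf : Function.Injective f)
    {w : List α} {t : ℕ} : (M.map f).AcceptsIn w t ↔ M.AcceptsIn w t := by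
  have key (n : ℕ) (q : M.Q) :
      (M.map f).StepsIn n (M.q0, 1, w) (q, 1, []) ↔ M.StepsIn n (M.q0, 1, w) (q, 1, []) := by
    rw [← M.stepsIn_map_iff hf, map_one]
  constructor
  · rintro ⟨n, hn, q, hq, h⟩
    exact ⟨n, hn, q, hq, (key n q).mp h⟩
  · rintro ⟨n, hn, q, hq, h⟩
    exact ⟨n, hn, q, hq, (key n q).mpr h⟩

end General

theorem exists_register_bound {α : Type*} {k : ℕ}
    (M : GAutomaton α (Multiplicative (Fin k → ℤ))) :
    ∃ D : ℕ, ∀ (n : ℕ) (c d : M.Q × Multiplicative (Fin k → ℤ) × List α), M.StepsIn n c d →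
      ∀ i, |Multiplicative.toAdd d.2.1 i - Multiplicative.toAdd c.2.1 i| ≤ D * n := by
  have hstep : ∃ D : ℕ, ∀ tr ∈ M.δ, ∀ i, |Multiplicative.toAdd tr.2.2.2 i| ≤ (D : ℤ) := by
    refine ⟨∑ tr ∈ M.finδ.toFinset, ∑ i, (Multiplicative.toAdd tr.2.2.2 i).natAbs, ?_⟩
    intro tr htr i
    rw [Int.abs_eq_natAbs]
    refine Int.ofNat_le.mpr (le_trans ?_ (Finset.single_le_sum (f := fun tr :
      M.Q × Option α × M.Q × Multiplicative (Fin k → ℤ) =>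
        ∑ i, (Multiplicative.toAdd tr.2.2.2 i).natAbs) (fun _ _ => Nat.zero_le _)
        (M.finδ.mem_toFinset.mpr htr)))
    exact Finset.single_le_sum (f := fun i => (Multiplicative.toAdd tr.2.2.2 i).natAbs)
      (fun _ _ => Nat.zero_le _) (Finset.mem_univ i)
  obtain ⟨D, hD⟩ := hstep
  refine ⟨D, fun n => ?_⟩
  induction n with
  | zero =>
    intro c d h i
    obtain rfl : c = d := h
    simp
  | succ n ih =>
    rintro c d ⟨b, ⟨σ, g, hmem, hb, -⟩, h⟩ i
    have h₁ := ih b d h i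
    have h₂ : |Multiplicative.toAdd g i| ≤ (D : ℤ) := hD _ hmem i
    rw [hb, toAdd_mul, Pi.add_apply] at h₁
    rw [abs_le] at *
    push_cast
    constructor <;> linarith [h₁.1, h₁.2, h₂.1, h₂.2]

end GAutomaton

theorem GRecognizableLinTime.of_injective {α : Type*} {G H : Type*} [Group G] [Group H]
    {L : Language α} {f : G →* H} (hf : Function.Injective f) (hL : GRecognizableLinTime G L) :
    GRecognizableLinTime H L := by
  obtain ⟨C, M, rfl, ht⟩ := hL
  refine ⟨C, M.map f, ?_, fun w hw => (M.acceptsIn_map_iff hf).mpr (ht w hw)⟩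
  ext w
  exact exists_congr fun t => M.acceptsIn_map_iff hf

/-- The word `0^(a₁) 1 ⋯ 0^(a_n) 1` coding the list `[a₁, …, a_n]`. -/
def unaryBlocks (l : List ℕ) : List (Fin 2) :=
  (l.map fun a => List.replicate a 0 ++ [1]).flatten

@[simp]
theorem unaryBlocks_nil : unaryBlocks [] = [] := rfl

theorem unaryBlocks_append (l l' : List ℕ) :
    unaryBlocks (l ++ l') = unaryBlocks l ++ unaryBlocks l' := by
  simp [unaryBlocks]

theorem unaryBlocks_injective : Function.Injective unaryBlocks := by
  have hne (a : ℕ) (l : List ℕ) : unaryBlocks (a :: l) ≠ [] := by cases a <;> nofun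
  intro l l' h
  induction l generalizing l' with
  | nil =>
    cases l' with
    | nil => rfl
    | cons b l' => exact absurd h.symm (hne b l')
  | cons a l ih =>
    induction a generalizing l' with
    | zero =>
      rcases l' with _ | ⟨_ | b, l'⟩
      · exact absurd h (hne 0 l)
      · rw [ih (List.cons.inj h).2]
      · exact absurd (List.cons.inj h).1 one_ne_zero
    | succ a iha =>
      rcases l' with _ | ⟨_ | b, l'⟩
      · exact absurd h (hne (a + 1) l)
      · exact absurd (List.cons.inj h).1 zero_ne_one
      · obtain ⟨rfl, rfl⟩ := List.cons.inj (iha (List.cons.inj h).2)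
        rfl

theorem length_unaryBlocks_le {N : ℕ} {l : List ℕ} (h : ∀ a ∈ l, a < N) :
    (unaryBlocks l).length ≤ l.length * N := by
  induction l with
  | nil => simp
  | cons a l ih =>
    have h₁ := ih fun b hb => h b (List.mem_cons_of_mem _ hb)
    have h₂ := h a List.mem_cons_self
    have h₃ : (unaryBlocks (a :: l)).length = a + 1 + (unaryBlocks l).length := by
      simp [unaryBlocks, Nat.add_assoc, Nat.add_comm]
    rw [h₃, List.length_cons, Nat.succ_mul]
    omega

theorem mem_doubledBlocks_iff {K : ℕ} {w : List (Fin 2)} :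
    w ∈ doubledBlocks K ↔ ∃ l : List ℕ, l.length = K ∧ w = unaryBlocks (l ++ l) := by
  have key (a : Fin K → ℕ) :
      (List.ofFn fun i => List.replicate (a i) (0 : Fin 2) ++ [1]).flatten =
        unaryBlocks (List.ofFn a) := by
    rw [unaryBlocks, List.map_ofFn]
    rfl
  constructor
  · rintro ⟨a, rfl⟩
    exact ⟨List.ofFn a, by simp, by rw [unaryBlocks_append, key]⟩
  · rintro ⟨l, rfl, rfl⟩
    exact ⟨l.get, by rw [unaryBlocks_append, key, List.ofFn_get]⟩

/-- The real-time automaton reading exactly `n` unary blocks. Its state is the number of blocks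
still to be completed, and each `0` read in state `r + 1` multiplies the register by `h r`. -/
def blockAutomaton {G : Type*} [Group G] (n : ℕ) (h : ℕ → G) : GAutomaton (Fin 2) G where
  Q := Fin (n + 1)
  finQ := inferInstance
  q0 := Fin.last n
  acc := {0}
  δ := Set.range (fun r : Fin n => (r.succ, some 0, r.succ, h r)) ∪
    Set.range (fun r : Fin n => (r.succ, some 1, r.castSucc, 1))
  finδ := (Set.finite_range _).union (Set.finite_range _)

/-- The register change of `blockAutomaton` on the blocks coded by a list. -/
def blockWeight {G : Type*} [Group G] (h : ℕ → G) : List ℕ → G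
  | [] => 1
  | a :: l => h l.length ^ a * blockWeight h l

section BlockAutomaton

variable {G : Type*} [Group G] {n : ℕ} {h : ℕ → G}

theorem blockAutomaton_realTime : (blockAutomaton n h).RealTime := by
  rintro tr (⟨r, rfl⟩ | ⟨r, rfl⟩) <;> simp

theorem blockAutomaton_stepsIn_unaryBlocks (l : List ℕ) (hl : l.length < n + 1) (x : G) :
    ∃ t, (blockAutomaton n h).StepsIn t (⟨l.length, hl⟩, x, unaryBlocks l)
      ((0 : Fin (n + 1)), x * blockWeight h l, []) := by
  induction l generalizing x with
  | nil => exact ⟨0, by simp [GAutomaton.StepsIn, blockWeight]⟩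
  | cons a l ih =>
    have hl' : l.length < n := by simpa using hl
    induction a generalizing x with
    | zero =>
      obtain ⟨t, ht⟩ := ih (by omega) x
      refine ⟨t + 1, (⟨l.length, by omega⟩, x, unaryBlocks l),
        ⟨some 1, 1, Or.inr ⟨⟨l.length, hl'⟩, rfl⟩, (mul_one x).symm, rfl⟩, ?_⟩
      simpa [blockWeight] using ht
    | succ a iha =>
      obtain ⟨t, ht⟩ := iha hl (x * h l.length)
      refine ⟨t + 1, (⟨l.length + 1, hl⟩, x * h l.length, unaryBlocks (a :: l)),
        ⟨some 0, h l.length, Or.inl ⟨⟨l.length, hl'⟩, rfl⟩, rfl, rfl⟩, ?_⟩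
      simpa [blockWeight, pow_succ', mul_assoc] using ht

theorem exists_unaryBlocks_of_blockAutomaton_stepsIn {t : ℕ} {r : Fin (n + 1)} {x y : G}
    {w : List (Fin 2)}
    (ht : (blockAutomaton n h).StepsIn t (r, x, w) ((0 : Fin (n + 1)), y, [])) :
    ∃ l : List ℕ, l.length = r ∧ w = unaryBlocks l ∧ y = x * blockWeight h l := by
  induction t generalizing r x w with
  | zero =>
    have ht' : (r, x, w) = ((0 : Fin (n + 1)), y, []) := ht
    simp only [Prod.mk.injEq] at ht'
    obtain ⟨rfl, rfl, rfl⟩ := ht'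
    exact ⟨[], by simp [blockWeight]⟩
  | succ t ih =>
    obtain ⟨⟨p, z, v⟩, ⟨σ, g, hmem, hz, hw⟩, hrest⟩ := ht
    obtain ⟨l, hl, rfl, rfl⟩ := ih hrest
    obtain rfl : z = x * g := hz
    rcases hmem with ⟨s, hs⟩ | ⟨s, hs⟩
    · cases hs
      rcases l with _ | ⟨a, l⟩
      · simp at hl
      · have hls : l.length = s := by simpa using hl
        exact ⟨(a + 1) :: l, hl, hw, by simp [blockWeight, pow_succ', mul_assoc, hls]⟩
    · cases hs
      exact ⟨0 :: l, by simpa using hl, hw, by simp [blockWeight]⟩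

theorem mem_lang_blockAutomaton_iff {w : List (Fin 2)} :
    w ∈ (blockAutomaton n h).lang ↔
      ∃ l : List ℕ, l.length = n ∧ w = unaryBlocks l ∧ blockWeight h l = 1 := by
  constructor
  · rintro ⟨_, t, -, q, rfl, ht⟩
    obtain ⟨l, hl, rfl, hw⟩ := exists_unaryBlocks_of_blockAutomaton_stepsIn ht
    exact ⟨l, hl, rfl, by simpa using hw.symm⟩
  · rintro ⟨l, rfl, rfl, hw⟩
    obtain ⟨t, ht⟩ := blockAutomaton_stepsIn_unaryBlocks (h := h) l (Nat.lt_succ_self _) 1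
    rw [hw, mul_one] at ht
    exact ⟨t, t, le_rfl, (0 : Fin (l.length + 1)), rfl, ht⟩

end BlockAutomaton

/-- Register updates comparing block `i` with block `i + K` in their own coordinate. -/
def comparisonWeight (K r : ℕ) : Multiplicative (Fin K → ℤ) :=
  Multiplicative.ofAdd fun c => if r = c then -1 else if r = c + K then 1 else 0

theorem toAdd_blockWeight_comparisonWeight {K : ℕ} (l : List ℕ) (c : Fin K) :
    Multiplicative.toAdd (blockWeight (comparisonWeight K) l) c =
      (l.reverse.getD (c + K) 0 : ℤ) - l.reverse.getD c 0 := by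
  induction l with
  | nil => simp [blockWeight]
  | cons a l ih =>
    have hc := c.isLt
    have key (i : ℕ) : (a :: l).reverse.getD i 0 =
        if l.length = i then a else l.reverse.getD i 0 := by
      rw [List.reverse_cons]
      rcases lt_trichotomy i l.length with hi | hi | hi
      · rw [if_neg hi.ne', List.getD_append _ _ _ _ (by simpa using hi)]
      · rw [if_pos hi.symm, List.getD_append_right _ _ _ _ (by simp [hi])]
        simp [hi]
      · rw [if_neg hi.ne, List.getD_eq_default _ _ (by simp; omega),
          List.getD_eq_default _ _ (by simp; omega)]
    rw [blockWeight, toAdd_mul, toAdd_pow, Pi.add_apply, Pi.smul_apply, ih, key, key,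
      comparisonWeight, toAdd_ofAdd]
    by_cases h₁ : l.length = c
    · have h₂ : l.length ≠ c + K := by omega
      have h₃ : l.reverse.getD (c : ℕ) 0 = 0 := List.getD_eq_default _ _ (by simp [h₁])
      simp only [if_pos h₁, if_neg h₂, h₃]
      simp
      ring
    · by_cases h₂ : l.length = c + K
      · have h₃ : l.reverse.getD (c + K) 0 = 0 := List.getD_eq_default _ _ (by simp [h₂])
        simp only [if_pos h₂, if_neg h₁, h₃]
        simp
        ring
      · simp [h₁, h₂]

theorem exists_append_self_iff_blockWeight {K : ℕ} {l : List ℕ} (hl : l.length = K + K) :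
    (∃ p : List ℕ, p.length = K ∧ l = p ++ p) ↔ blockWeight (comparisonWeight K) l = 1 := by
  have key : blockWeight (comparisonWeight K) l = 1 ↔
      ∀ c < K, l.reverse.getD (c + K) 0 = l.reverse.getD c 0 := by
    rw [← toAdd_eq_zero, funext_iff]
    simp only [toAdd_blockWeight_comparisonWeight, Pi.zero_apply, sub_eq_zero, Nat.cast_inj]
    exact Fin.forall_iff
  rw [key]
  constructor
  · rintro ⟨p, rfl, rfl⟩ c hc
    rw [List.reverse_append, List.getD_append_right _ _ _ _ (by simp),
      List.getD_append _ _ _ _ (by simpa using hc)]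
    simp
  · intro h
    have hhalf : l.reverse.take K = l.reverse.drop K := by
      refine List.ext_getElem (by simp [hl]) fun i h₁ h₂ => ?_
      have hi : i < K := by simp at h₁; omega
      have := h i hi
      rw [List.getD_eq_getElem _ _ (by simp; omega), List.getD_eq_getElem _ _ (by simp; omega)]
        at this
      simp only [List.getElem_take, List.getElem_drop, ← this, Nat.add_comm]
    refine ⟨(l.reverse.take K).reverse, by simp [hl], ?_⟩
    rw [← List.reverse_append]
    nth_rw 2 [hhalf]
    rw [List.take_append_drop, List.reverse_reverse]

theorem lang_blockAutomaton_comparisonWeight (K : ℕ) :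
    (blockAutomaton (K + K) (comparisonWeight K)).lang = doubledBlocks K := by
  ext w
  rw [mem_lang_blockAutomaton_iff, mem_doubledBlocks_iff]
  constructor
  · rintro ⟨l, hl, rfl, hw⟩
    obtain ⟨p, hp, rfl⟩ := (exists_append_self_iff_blockWeight hl).mpr hw
    exact ⟨p, hp, rfl⟩
  · rintro ⟨p, hp, rfl⟩
    have hl : (p ++ p).length = K + K := by simp [hp]
    exact ⟨p ++ p, hl, rfl, (exists_append_self_iff_blockWeight hl).mp ⟨p, hp, rfl⟩⟩

/-- Linear time leaves only `O(N ^ k)` configurations at the middle of the `N ^ (k + 1)` words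
with blocks shorter than `N`, so two of these words can be crossed. -/
theorem not_gRecognizableLinTime_doubledBlocks (k : ℕ) :
    ¬ GRecognizableLinTime (Multiplicative (Fin k → ℤ)) (doubledBlocks (k + 1)) := by
  rintro ⟨C, M, hM, ht⟩
  have := M.finQ
  have := Fintype.ofFinite M.Q
  obtain ⟨D, hD⟩ := M.exists_register_bound
  set A := 2 * (D * (C * (2 * (k + 1)) + C)) + 1 with hA
  set N := Fintype.card M.Q * A ^ k + 1 with hN
  set B := D * (C * (2 * ((k + 1) * N)) + C) with hB
  have hBA : 2 * B + 1 ≤ A * N := by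
    have hN1 : 1 ≤ N := by omega
    rw [hA, hB]
    nlinarith [Nat.zero_le (D * C), Nat.mul_le_mul_left (D * C) hN1]
  let code (a : Fin (k + 1) → Fin N) : List ℕ := List.ofFn fun i => (a i : ℕ)
  have hcode (a) : (code a).length = k + 1 := by simp [code]
  have hmid (a : Fin (k + 1) → Fin N) : ∃ c : M.Q × (Fin k → Finset.Icc (-(B : ℤ)) B),
      (∃ m, ∀ v, M.StepsIn m (M.q0, 1, unaryBlocks (code a) ++ v)
        (c.1, Multiplicative.ofAdd fun i => (c.2 i : ℤ), v)) ∧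
      ∃ r, ∃ q ∈ M.acc, M.StepsIn r
        (c.1, Multiplicative.ofAdd fun i => (c.2 i : ℤ), unaryBlocks (code a)) (q, 1, []) := by
    obtain ⟨n, hn, q, hq, hsteps⟩ := ht _ (mem_doubledBlocks_iff.mpr ⟨code a, hcode a, rfl⟩)
    rw [unaryBlocks_append] at hsteps
    obtain ⟨m, r, p, y, hmr, hpre, hpost⟩ := hsteps.split
    have hlen : (unaryBlocks (code a ++ code a)).length ≤ 2 * ((k + 1) * N) := by
      have := length_unaryBlocks_le (N := N) (l := code a) (by
        intro b hb
        obtain ⟨i, rfl⟩ := (List.mem_ofFn' _ _).mp hb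
        exact (a i).isLt)
      rw [unaryBlocks_append, List.length_append]
      rw [hcode] at this
      omega
    have hmB : D * m ≤ B := Nat.mul_le_mul_left D <| by
      have := Nat.mul_le_mul_left C hlen
      simp only at hn
      omega
    have hy (i : Fin k) : Multiplicative.toAdd y i ∈ Finset.Icc (-(B : ℤ)) B := by
      have := hD _ _ _ (hpre []) i
      rw [Finset.mem_Icc, ← abs_le]
      simp only [toAdd_one, Pi.zero_apply, sub_zero] at this
      exact this.trans (by exact_mod_cast hmB)
    exact ⟨(p, fun i => ⟨_, hy i⟩), ⟨m, hpre⟩, r, q, hq, hpost⟩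
  choose mid hpre hpost using hmid
  have hcard : Fintype.card (M.Q × (Fin k → Finset.Icc (-(B : ℤ)) B)) <
      Fintype.card (Fin (k + 1) → Fin N) := by
    have hIcc : Fintype.card (Finset.Icc (-(B : ℤ)) B) = 2 * B + 1 := by
      rw [Fintype.card_coe, Int.card_Icc]
      omega
    rw [Fintype.card_prod, Fintype.card_fun, Fintype.card_fun, hIcc, Fintype.card_fin,
      Fintype.card_fin, Fintype.card_fin]
    calc Fintype.card M.Q * (2 * B + 1) ^ k
        ≤ Fintype.card M.Q * (A * N) ^ k := Nat.mul_le_mul_left _ (Nat.pow_le_pow_left hBA k)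
      _ = (Fintype.card M.Q * A ^ k) * N ^ k := by rw [mul_pow, mul_assoc]
      _ < N * N ^ k := Nat.mul_lt_mul_of_pos_right (by omega) (by positivity)
      _ = N ^ (k + 1) := (pow_succ' N k).symm
  obtain ⟨a, b, hab, heq⟩ := Fintype.exists_ne_map_eq_of_card_lt mid hcard
  obtain ⟨m, hm⟩ := hpre a
  obtain ⟨r, q, hq, hr⟩ := hpost b
  rw [← heq] at hr
  have hmem : unaryBlocks (code a ++ code b) ∈ doubledBlocks (k + 1) := by
    rw [← hM, unaryBlocks_append]
    exact ⟨m + r, m + r, le_rfl, q, hq, (hm _).trans hr⟩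
  obtain ⟨l, hl, hcross⟩ := mem_doubledBlocks_iff.mp hmem
  obtain ⟨h₁, h₂⟩ := List.append_inj (unaryBlocks_injective hcross) ((hcode a).trans hl.symm)
  refine hab (funext fun i => Fin.ext ?_)
  exact congrFun (List.ofFn_injective (h₁.trans h₂.symm)) i

/-- The embedding `ℤᵏ → ℤ^(k+1)` appending a zero coordinate. -/
def appendZeroHom (k : ℕ) :
    Multiplicative (Fin k → ℤ) →* Multiplicative (Fin (k + 1) → ℤ) :=
  AddMonoidHom.toMultiplicative
    { toFun := fun x => Fin.snoc (α := fun _ => ℤ) x 0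
      map_zero' := by
        ext i
        induction i using Fin.lastCases <;> simp
      map_add' := fun x y => by
        ext i
        induction i using Fin.lastCases <;> simp }

theorem appendZeroHom_injective (k : ℕ) : Function.Injective (appendZeroHom k) := by
  intro x y h
  have hsnoc : (Fin.snoc (α := fun _ => ℤ) (Multiplicative.toAdd x) 0 : Fin (k + 1) → ℤ) =
    Fin.snoc (α := fun _ => ℤ) (Multiplicative.toAdd y) 0 := h
  exact (Fin.snoc_inj.mp hsnoc).1

/-- For every `k ≥ 1`, `𝔏(ℤᵏ)ʷ_{O(n)} ⊊ 𝔏(ℤ^(k+1))ʷ_{O(n)}`: the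
language `L_(k+1)` is recognized in real time by a `ℤ^(k+1)`-automaton but by no weakly
linear-time bounded `ℤᵏ`-automaton. (The free Abelian group `ℤᵏ` is rendered
multiplicatively as `Multiplicative (Fin k → ℤ)`.) -/
theorem Zk_lintime_hierarchy (k : ℕ) (hk : 1 ≤ k) :
    (∀ (α : Type) [Fintype α] (L : Language α),
      GRecognizableLinTime (Multiplicative (Fin k → ℤ)) L →
        GRecognizableLinTime (Multiplicative (Fin (k + 1) → ℤ)) L) ∧
    (∃ M : GAutomaton (Fin 2) (Multiplicative (Fin (k + 1) → ℤ)),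
      M.RealTime ∧ M.lang = doubledBlocks (k + 1)) ∧
    ¬ GRecognizableLinTime (Multiplicative (Fin k → ℤ)) (doubledBlocks (k + 1)) := by
  exact ⟨fun _ _ _ hL => hL.of_injective (appendZeroHom_injective k),
    ⟨_, blockAutomaton_realTime, lang_blockAutomaton_comparisonWeight (k + 1)⟩,
    not_gRecognizableLinTime_doubledBlocks k⟩
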